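/- Let r > 0, let B_r(0) ⊂ ℝ² be the open disc of radius r centered at the origin, and let u_V(x) := x/|x| for x ≠ 0. Then u_V ∈ W^{1,1}(B_r(0);S¹), and the relaxed area satisfies 𝒜(u_V, B_r(0)) ≤ ∫_{B_r(0)} √(1 + 1/|x|²) dx + min{2πr, π}. -/

import Mathlib

open MeasureTheory Metric Filter Set
open scoped ENNReal NNReal Topology Classical

noncomputable section

abbrev R2 := EuclideanSpace ℝ (Fin 2)

/-- `Ω ⊂ ℝ²` has Lipschitz boundary: near every boundary point, after a rigid motion,
`Ω` coincides with the open region strictly above the graph of a Lipschitz function. -/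
def HasLipschitzBoundary (Ω : Set R2) : Prop :=
  ∀ p ∈ frontier Ω, ∃ r : ℝ, 0 < r ∧ ∃ (f : R2 ≃ᵢ R2) (γ : ℝ → ℝ) (L : ℝ≥0),
    LipschitzWith L γ ∧ ∀ x ∈ Metric.ball p r, (x ∈ Ω ↔ γ (f x 0) < f x 1)

/-- `G` is the weak (distributional) gradient of `u` on `Ω`:
`∫_Ω u_i ∂_j φ = -∫_Ω G_{ij} φ` for all test functions `φ ∈ C_c^∞(Ω)`. -/
def IsWeakGradient (Ω : Set R2) (u : R2 → R2) (G : R2 → Matrix (Fin 2) (Fin 2) ℝ) : Prop :=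
  ∀ φ : R2 → ℝ, ContDiff ℝ (⊤ : ℕ∞) φ → HasCompactSupport φ → tsupport φ ⊆ Ω →
    ∀ i j : Fin 2,
      (∫ x in Ω, u x i * fderiv ℝ φ x (EuclideanSpace.single j 1)) =
        - ∫ x in Ω, G x i j * φ x

/-- `u ∈ W^{1,1}(Ω;ℝ²)` with weak gradient `G`. -/
def MemW11 (Ω : Set R2) (u : R2 → R2) (G : R2 → Matrix (Fin 2) (Fin 2) ℝ) : Prop :=
  IntegrableOn u Ω ∧ (∀ i j : Fin 2, IntegrableOn (fun x => G x i j) Ω) ∧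
    IsWeakGradient Ω u G

/-- `|u| = 1` a.e. in `Ω`. -/
def SphereValued (Ω : Set R2) (u : R2 → R2) : Prop :=
  ∀ᵐ x ∂(volume.restrict Ω), ‖u x‖ = 1

/-- Frobenius norm of a `2×2` matrix. -/
def frob (M : Matrix (Fin 2) (Fin 2) ℝ) : ℝ :=
  Real.sqrt (∑ i, ∑ j, (M i j) ^ 2)

/-- Jacobian matrix of a map `v : ℝ² → ℝ²`. -/
def jacobianMatrix (v : R2 → R2) (x : R2) : Matrix (Fin 2) (Fin 2) ℝ :=
  Matrix.of fun i j => fderiv ℝ v x (EuclideanSpace.single j 1) i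

/-- Classical graph area `A(v,A) = ∫_A √(1 + |∇v|² + (Jv)²)` of a `C¹` map. -/
def classicalArea (A : Set R2) (v : R2 → R2) : ℝ≥0∞ :=
  ∫⁻ x in A, ENNReal.ofReal
    (Real.sqrt (1 + (∑ i, ∑ j, (jacobianMatrix v x i j) ^ 2) + (jacobianMatrix v x).det ^ 2))

/-- `L¹`-relaxed area functional `𝒜(u,A)`. -/
def relaxedArea (u : R2 → R2) (A : Set R2) : ℝ≥0∞ :=
  sInf { a : ℝ≥0∞ | ∃ v : ℕ → R2 → R2,
    (∀ k, ContDiffOn ℝ 1 (v k) A) ∧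
    (∀ k, IntegrableOn (fun x => v k x - u x) A) ∧
    Tendsto (fun k => ∫ x in A, ‖v k x - u x‖) atTop (nhds 0) ∧
    a = Filter.liminf (fun k => classicalArea A (v k)) atTop }

/-- `λ_u = (1/2)(u₁ ∇^⊥u₂ − u₂ ∇^⊥u₁)`, computed from the weak gradient `G`. -/
def lambdaVec (u : R2 → R2) (G : R2 → Matrix (Fin 2) (Fin 2) ℝ) (x : R2) : Fin 2 → ℝ :=
  ![ (1 / 2) * (-(u x 0) * G x 1 1 + u x 1 * G x 0 1),
     (1 / 2) * (u x 0 * G x 1 0 - u x 1 * G x 0 0) ]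

/-- Distributional Jacobian pairing `⟨Det(∇u), φ⟩ = ∫_Ω λ_u · ∇φ`. -/
def detPairing (Ω : Set R2) (u : R2 → R2) (G : R2 → Matrix (Fin 2) (Fin 2) ℝ)
    (φ : R2 → ℝ) : ℝ :=
  ∫ x in Ω, ∑ j, lambdaVec u G x j * fderiv ℝ φ x (EuclideanSpace.single j 1)

/-- `φ ∈ Lip₀(Ω)`: Lipschitz on `cl(Ω)` and vanishing on `∂Ω`. -/
def MemLip0 (Ω : Set R2) (φ : R2 → ℝ) : Prop :=
  (∃ L : ℝ≥0, LipschitzOnWith L φ (closure Ω)) ∧ ∀ p ∈ frontier Ω, φ p = 0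

/-- Admissible test functions for the flat norm: Lipschitz constant `≤ L` on `cl(Ω)`,
vanishing on `Z`, and bounded by `1` on `cl(Ω)`. -/
def FlatAdmissible (Ω Z : Set R2) (L : ℝ≥0) (φ : R2 → ℝ) : Prop :=
  LipschitzOnWith L φ (closure Ω) ∧ (∀ p ∈ Z, φ p = 0) ∧ ∀ p ∈ closure Ω, |φ p| ≤ 1

/-- Flat norm of a functional `F`, with vanishing condition on the set `Z`. -/
def flatNormOn (Ω Z : Set R2) (L : ℝ≥0) (F : (R2 → ℝ) → ℝ) : ℝ≥0∞ :=
  ⨆ φ ∈ {φ : R2 → ℝ | FlatAdmissible Ω Z L φ}, ENNReal.ofReal (F φ)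

/-- Flat norm of a functional `F` on `Lip₀(Ω)`; `L = 2` gives `‖·‖_{flat,α}` (α = 1/2),
`L = 1` gives `‖·‖_flat`. -/
def flatNorm (Ω : Set R2) (L : ℝ≥0) (F : (R2 → ℝ) → ℝ) : ℝ≥0∞ :=
  flatNormOn Ω (frontier Ω) L F

/-- `d̄_Ω(x,y) = min{|x−y|, dist(x,∂Ω) + dist(y,∂Ω)}`. -/
def dbar (Ω : Set R2) (x y : R2) : ℝ :=
  min (dist x y) (Metric.infDist x (frontier Ω) + Metric.infDist y (frontier Ω))

/-- Countably subadditive interior envelope `𝒜**(u,V)` (relative to `Ω`). -/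
def envA (u : R2 → R2) (Ω V : Set R2) : ℝ≥0∞ :=
  sInf { a : ℝ≥0∞ | ∃ A : ℕ → Set R2,
    (∀ k, IsOpen (A k) ∧ A k ⊆ Ω) ∧ V ⊆ ⋃ k, A k ∧ a = ∑' k, relaxedArea u (A k) }

/-- Property `(P_f)` for a finite family of pairs of points of `cl(Ω)`. -/
def SatisfiesPf (Ω : Set R2) {n : ℕ} (x y : Fin n → R2) : Prop :=
  (∀ k, (x k ∈ Ω ∧ y k ∈ frontier Ω ∧ dist (x k) (y k) = Metric.infDist (x k) (frontier Ω)) ∨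
        (y k ∈ Ω ∧ x k ∈ frontier Ω ∧ dist (x k) (y k) = Metric.infDist (y k) (frontier Ω))) ∧
  ∀ i j, x i ∈ Ω → y j ∈ Ω → x i ≠ y j

/-- The points of the family `x, y` lying in `Ω` are distinct and three by three
not collinear. -/
def InteriorPointsGeneric (Ω : Set R2) {n : ℕ} (x y : Fin n → R2) : Prop :=
  (∀ a b : Fin n ⊕ Fin n, Sum.elim x y a ∈ Ω → Sum.elim x y b ∈ Ω → a ≠ b →
    Sum.elim x y a ≠ Sum.elim x y b) ∧
  ∀ a b c : Fin n ⊕ Fin n, Sum.elim x y a ∈ Ω → Sum.elim x y b ∈ Ω → Sum.elim x y c ∈ Ω →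
    a ≠ b → a ≠ c → b ≠ c →
    ¬ Collinear ℝ ({Sum.elim x y a, Sum.elim x y b, Sum.elim x y c} : Set R2)

/-- `ι(w₁,w₂) = (w₁,−w₂)`. -/
def conjPt (w : R2) : R2 := (WithLp.equiv 2 (Fin 2 → ℝ)).symm ![w 0, -(w 1)]

/-- `u` is a (positive/negative) vortex around the points of the family lying in `Ω`:
the closed discs of radii `ρ` are contained in `Ω` and pairwise disjoint,
`u(z) = (z−x_i)/|z−x_i|` on `B_{ρ}(x_i)` and `u(z) = ι((z−y_j)/|z−y_j|)` on `B_{ρ}(y_j)`. -/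
def VortexAt (Ω : Set R2) (u : R2 → R2) {n : ℕ} (x y : Fin n → R2)
    (ρ : Fin n ⊕ Fin n → ℝ) : Prop :=
  (∀ a, Sum.elim x y a ∈ Ω → Metric.closedBall (Sum.elim x y a) (ρ a) ⊆ Ω) ∧
  (∀ a b, a ≠ b → Sum.elim x y a ∈ Ω → Sum.elim x y b ∈ Ω →
    Disjoint (Metric.closedBall (Sum.elim x y a) (ρ a))
      (Metric.closedBall (Sum.elim x y b) (ρ b))) ∧
  (∀ i, x i ∈ Ω → ∀ᵐ z ∂(volume.restrict (Metric.ball (x i) (ρ (Sum.inl i)))),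
    u z = ‖z - x i‖⁻¹ • (z - x i)) ∧
  (∀ i, y i ∈ Ω → ∀ᵐ z ∂(volume.restrict (Metric.ball (y i) (ρ (Sum.inr i)))),
    u z = conjPt (‖z - y i‖⁻¹ • (z - y i)))

/-- The energy `E(I_P, I_D, τ)` of a partition `{I_Dᶜ, I_D}` of `I` and an injection
`τ : I_D → I`. -/
def energy (Ω : Set R2) {n : ℕ} (x y : Fin n → R2) (ID : Finset (Fin n))
    (τ : Fin n → Fin n) : ℝ≥0∞ :=
  ((IDᶜ.filter fun k => x k ∈ Ω).card : ℝ≥0∞) +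
  (((Finset.univ \ ID.image τ).filter fun j => y j ∈ Ω).card : ℝ≥0∞) +
  2 * ∑ k ∈ ID, μH[1] (segment ℝ (y (τ k)) (x k) ∩ Ω)

lemma lintegral_ball_polar (r : ℝ) (f : R2 → ℝ≥0∞) (hf : Measurable f) :
    ∫⁻ x in ball (0 : R2) r, f x =
      ∫⁻ ρ in Ioo 0 r, ∫⁻ θ in Ioo (-Real.pi) Real.pi,
        ENNReal.ofReal ρ * f !₂[ρ * Real.cos θ, ρ * Real.sin θ] := by
  have hm : Measurable (fun q : ℝ × ℝ => (!₂[q.1, q.2] : R2)) := by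
    fun_prop
  have hmp : MeasurePreserving (fun q : ℝ × ℝ => (!₂[q.1, q.2] : R2)) volume volume := by
    have h1 := (volume_preserving_finTwoArrow ℝ).symm
    have h2 := (EuclideanSpace.volume_preserving_symm_measurableEquiv_toLp (Fin 2)).symm
    exact h2.comp h1
  have hg : Measurable ((ball (0 : R2) r).indicator f) := hf.indicator measurableSet_ball
  rw [← lintegral_indicator measurableSet_ball, ← hmp.lintegral_comp hg,
    ← lintegral_comp_polarCoord_symm]
  have hmm : Measurable (fun q : ℝ × ℝ => 
      ENNReal.ofReal q.1 * f !₂[q.1 * Real.cos q.2, q.1 * Real.sin q.2]) := by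
    have : Measurable (fun q : ℝ × ℝ => (!₂[q.1 * Real.cos q.2, q.1 * Real.sin q.2] : R2)) := by
      fun_prop
    exact (by fun_prop : Measurable fun q : ℝ × ℝ => ENNReal.ofReal q.1).mul (hf.comp this)
  rw [lintegral_lintegral hmm.aemeasurable, Measure.prod_restrict]
  rw [← lintegral_indicator (measurableSet_Ioo.prod measurableSet_Ioo),
    ← lintegral_indicator polarCoord.open_target.measurableSet]
  congr 1
  ext ⟨ρ, θ⟩
  simp only [indicator, polarCoord_target, mem_prod, mem_Ioi, mem_Ioo, polarCoord_symm_apply,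
    mem_ball_zero_iff, smul_eq_mul]
  by_cases h : 0 < ρ
  · have : ‖(!₂[ρ * Real.cos θ, ρ * Real.sin θ] : R2)‖ = ρ := by
      rw [EuclideanSpace.norm_eq]
      simp only [Fin.sum_univ_two]
      rw [Real.sqrt_eq_iff_eq_sq (by positivity) h.le]
      simp [mul_pow]
      rw [← mul_add, Real.cos_sq_add_sin_sq, mul_one]
    simp only [h, this]
    by_cases h' : ρ < r <;> simp [h']
  · simp [h]

lemma norm_sq_R2 (x : R2) : ‖x‖ ^ 2 = x 0 ^ 2 + x 1 ^ 2 := by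
  rw [EuclideanSpace.norm_sq_eq]; simp [Fin.sum_univ_two]

lemma norm_polar {ρ : ℝ} (h : 0 < ρ) (θ : ℝ) :
    ‖(!₂[ρ * Real.cos θ, ρ * Real.sin θ] : R2)‖ = ρ := by
  have h1 := norm_sq_R2 !₂[ρ * Real.cos θ, ρ * Real.sin θ]
  simp only [Matrix.cons_val_zero, Matrix.cons_val_one] at h1
  have h2 : (ρ * Real.cos θ) ^ 2 + (ρ * Real.sin θ) ^ 2 = ρ ^ 2 := by
    linear_combination ρ ^ 2 * Real.cos_sq_add_sin_sq θ
  rw [h2] at h1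
  exact (pow_left_inj₀ (norm_nonneg _) h.le two_ne_zero).1 h1

/-- The regularised modulus. -/
def Rr (e : ℝ) (x : R2) : ℝ := Real.sqrt (x 0 ^ 2 + x 1 ^ 2 + e ^ 2)

def Dd (e : ℝ) (x : R2) : ℝ := (Rr e x + x 0) ^ 2 + x 1 ^ 2

lemma Rr_sq (e : ℝ) (x : R2) : Rr e x ^ 2 = x 0 ^ 2 + x 1 ^ 2 + e ^ 2 :=
  Real.sq_sqrt (by positivity)

lemma Rr_pos {e : ℝ} (he : 0 < e) (x : R2) : 0 < Rr e x :=
  Real.sqrt_pos.2 (by positivity)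

lemma norm_le_Rr (e : ℝ) (x : R2) : ‖x‖ ≤ Rr e x := by
  apply Real.le_sqrt_of_sq_le
  rw [norm_sq_R2]; nlinarith [sq_nonneg e]

lemma abs_x0_lt {e : ℝ} (he : 0 < e) (x : R2) : 0 < Rr e x + x 0 := by
  have h := Rr_sq e x
  have h1 := Rr_pos he x
  by_contra hc
  push Not at hc
  nlinarith [sq_nonneg (x 1), sq_pos_of_pos he]

lemma Dd_pos {e : ℝ} (he : 0 < e) (x : R2) : 0 < Dd e x := by
  have := abs_x0_lt he x
  unfold Dd; positivity

lemma measurable_Rr (e : ℝ) : Measurable (Rr e) := by unfold Rr; fun_prop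
lemma measurable_Dd (e : ℝ) : Measurable (Dd e) := by
  have := measurable_Rr e
  unfold Dd; fun_prop

lemma lintegral_inv_norm (r : ℝ) :
    ∫⁻ x in ball (0 : R2) r, ENNReal.ofReal (‖x‖⁻¹) = ENNReal.ofReal (2 * Real.pi * r) := by
  rw [lintegral_ball_polar r _ (by fun_prop)]
  have : ∀ ρ ∈ Ioo 0 r, (∫⁻ θ in Ioo (-Real.pi) Real.pi, ENNReal.ofReal ρ *
      ENNReal.ofReal (‖(!₂[ρ * Real.cos θ, ρ * Real.sin θ] : R2)‖⁻¹)) =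
      ENNReal.ofReal (2 * Real.pi) := by
    intro ρ hρ
    have h1 : ∀ θ : ℝ, ENNReal.ofReal ρ *
      ENNReal.ofReal (‖(!₂[ρ * Real.cos θ, ρ * Real.sin θ] : R2)‖⁻¹) = 1 := by
      intro θ
      rw [norm_polar hρ.1, ← ENNReal.ofReal_mul hρ.1.le, mul_inv_cancel₀ hρ.1.ne',
        ENNReal.ofReal_one]
    simp only [h1]
    rw [setLIntegral_const, Real.volume_Ioo, one_mul]
    congr 1; ring
  rw [setLIntegral_congr_fun measurableSet_Ioo this]
  rw [setLIntegral_const, Real.volume_Ioo, ← ENNReal.ofReal_mul (by positivity), sub_zero]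

lemma integrableOn_inv_norm (r : ℝ) :
    IntegrableOn (fun x : R2 => ‖x‖⁻¹) (ball 0 r) := by
  refine ⟨by fun_prop, ?_⟩
  rw [hasFiniteIntegral_iff_ofReal (ae_of_all _ fun x => by positivity), lintegral_inv_norm r]
  exact ENNReal.ofReal_lt_top

/-- Poisson kernel integral. -/
lemma lintegral_poisson {a : ℝ} (ha : 1 < a) :
    ∫⁻ θ in Ioo (-Real.pi) Real.pi,
      ENNReal.ofReal ((a ^ 2 - 1) / ((a + Real.cos θ) ^ 2 + Real.sin θ ^ 2)) =
      ENNReal.ofReal (2 * Real.pi) := by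
  have hpos : ∀ θ, 0 < a + Real.cos θ := fun θ => by linarith [Real.neg_one_le_cos θ]
  have hcont : Continuous fun θ : ℝ =>
      (a ^ 2 - 1) / ((a + Real.cos θ) ^ 2 + Real.sin θ ^ 2) := by
    refine Continuous.div (by fun_prop) (by fun_prop) fun θ => ?_
    have := hpos θ; positivity
  have hderiv : ∀ θ : ℝ, HasDerivAt
      (fun θ => θ - 2 * Real.arctan (Real.sin θ / (a + Real.cos θ)))
      ((a ^ 2 - 1) / ((a + Real.cos θ) ^ 2 + Real.sin θ ^ 2)) θ := by
    intro θ
    have h := hpos θ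
    have h1 := (Real.hasDerivAt_sin θ).div ((Real.hasDerivAt_cos θ).const_add a) h.ne'
    have h2 := (hasDerivAt_id θ).sub ((h1.arctan).const_mul 2)
    refine h2.congr_deriv ?_
    have h3 : (a + Real.cos θ) ^ 2 + Real.sin θ ^ 2 ≠ 0 := by positivity
    have h4 : 1 + (Real.sin θ / (a + Real.cos θ)) ^ 2 ≠ 0 := by positivity
    simp only [Pi.div_apply]
    field_simp
    have := Real.cos_sq_add_sin_sq θ
    linear_combination (-1 : ℝ) * this
  rw [restrict_Ioo_eq_restrict_Ioc, ← ofReal_integral_eq_lintegral_ofReal,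
    ← intervalIntegral.integral_of_le (by linarith [Real.pi_pos]),
    intervalIntegral.integral_eq_sub_of_hasDerivAt (fun θ _ => hderiv θ)
      (hcont.intervalIntegrable _ _)]
  · congr 1; simp; ring
  · exact (hcont.intervalIntegrable (-Real.pi) Real.pi).1
  · refine ae_of_all _ fun θ => ?_
    have := hpos θ
    have : 0 < a ^ 2 - 1 := by nlinarith
    simp only [Pi.zero_apply]; positivity

/-- Mass carried by the dipole wall. -/
lemma lintegral_wall (r e : ℝ) (he : 0 < e) :
    ∫⁻ x in ball (0 : R2) r, ENNReal.ofReal (e ^ 2 / (‖x‖ * Dd e x)) =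
      ENNReal.ofReal (2 * Real.pi * r) := by
  have := measurable_Dd e
  rw [lintegral_ball_polar r _ (by fun_prop)]
  have : ∀ ρ ∈ Ioo 0 r, (∫⁻ θ in Ioo (-Real.pi) Real.pi, ENNReal.ofReal ρ *
      ENNReal.ofReal (e ^ 2 / (‖(!₂[ρ * Real.cos θ, ρ * Real.sin θ] : R2)‖ *
        Dd e !₂[ρ * Real.cos θ, ρ * Real.sin θ]))) =
      ENNReal.ofReal (2 * Real.pi) := by
    intro ρ hρ
    have hρ0 := hρ.1
    set a := Real.sqrt (ρ ^ 2 + e ^ 2) / ρ with ha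
    have hs : 0 < Real.sqrt (ρ ^ 2 + e ^ 2) := Real.sqrt_pos.2 (by positivity)
    have haρ : ρ * a = Real.sqrt (ρ ^ 2 + e ^ 2) := by rw [ha]; field_simp
    have hasq : (ρ * a) ^ 2 = ρ ^ 2 + e ^ 2 := by rw [haρ, Real.sq_sqrt (by positivity)]
    have ha1 : 1 < a := by
      rw [ha, lt_div_iff₀ hρ0, one_mul]
      apply Real.lt_sqrt_of_sq_lt; nlinarith [sq_pos_of_pos he]
    rw [← lintegral_poisson ha1]
    congr 1
    ext θ
    have hpos : 0 < a + Real.cos θ := by linarith [Real.neg_one_le_cos θ]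
    have hR : Rr e !₂[ρ * Real.cos θ, ρ * Real.sin θ] = ρ * a := by
      rw [haρ]; unfold Rr
      congr 1
      simp only [Matrix.cons_val_zero, Matrix.cons_val_one]
      linear_combination ρ ^ 2 * Real.cos_sq_add_sin_sq θ
    rw [norm_polar hρ0, ← ENNReal.ofReal_mul hρ0.le]
    congr 1
    unfold Dd
    rw [hR]
    simp only [Matrix.cons_val_zero, Matrix.cons_val_one]
    have h3 : (a + Real.cos θ) ^ 2 + Real.sin θ ^ 2 ≠ 0 := by positivity
    have h5 : (ρ * a + ρ * Real.cos θ) ^ 2 + (ρ * Real.sin θ) ^ 2 =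
      ρ ^ 2 * ((a + Real.cos θ) ^ 2 + Real.sin θ ^ 2) := by ring
    rw [h5]
    field_simp
    linear_combination -hasq
  rw [setLIntegral_congr_fun measurableSet_Ioo this]
  rw [setLIntegral_const, Real.volume_Ioo, ← ENNReal.ofReal_mul (by positivity), sub_zero]

/-- Mass carried by the disc. -/
lemma lintegral_disc (r e : ℝ) (hr : 0 < r) (he : 0 < e) :
    ∫⁻ x in ball (0 : R2) r, ENNReal.ofReal (e ^ 2 / Rr e x ^ 4) ≤
      ENNReal.ofReal Real.pi := by
  have := measurable_Rr e
  rw [lintegral_ball_polar r _ (by fun_prop)]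
  have h : ∀ ρ ∈ Ioo 0 r, (∫⁻ θ in Ioo (-Real.pi) Real.pi, ENNReal.ofReal ρ *
      ENNReal.ofReal (e ^ 2 / Rr e !₂[ρ * Real.cos θ, ρ * Real.sin θ] ^ 4)) =
      ENNReal.ofReal (2 * Real.pi * (ρ * e ^ 2 / (ρ ^ 2 + e ^ 2) ^ 2)) := by
    intro ρ hρ
    have hρ0 := hρ.1
    have h1 : ∀ θ : ℝ, ENNReal.ofReal ρ *
      ENNReal.ofReal (e ^ 2 / Rr e !₂[ρ * Real.cos θ, ρ * Real.sin θ] ^ 4) =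
        ENNReal.ofReal (ρ * e ^ 2 / (ρ ^ 2 + e ^ 2) ^ 2) := by
      intro θ
      have h2 : Rr e !₂[ρ * Real.cos θ, ρ * Real.sin θ] ^ 2 = ρ ^ 2 + e ^ 2 := by
        rw [Rr_sq]
        simp only [Matrix.cons_val_zero, Matrix.cons_val_one]
        linear_combination ρ ^ 2 * Real.cos_sq_add_sin_sq θ
      have h3 : Rr e !₂[ρ * Real.cos θ, ρ * Real.sin θ] ^ 4 = (ρ ^ 2 + e ^ 2) ^ 2 := by
        rw [← h2]; ring
      rw [← ENNReal.ofReal_mul hρ0.le, h3]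
      congr 1; ring
    simp only [h1]
    rw [setLIntegral_const, Real.volume_Ioo, ← ENNReal.ofReal_mul (by positivity)]
    congr 1; ring
  rw [setLIntegral_congr_fun measurableSet_Ioo h]
  have hcont : Continuous fun ρ : ℝ => 2 * Real.pi * (ρ * e ^ 2 / (ρ ^ 2 + e ^ 2) ^ 2) := by
    refine continuous_const.mul (Continuous.div (by fun_prop) (by fun_prop) fun ρ => ?_)
    positivity
  have hderiv : ∀ ρ : ℝ, HasDerivAt (fun ρ => - (Real.pi * e ^ 2) / (ρ ^ 2 + e ^ 2))
      (2 * Real.pi * (ρ * e ^ 2 / (ρ ^ 2 + e ^ 2) ^ 2)) ρ := by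
    intro ρ
    have h0 : ρ ^ 2 + e ^ 2 ≠ 0 := by positivity
    have h1 := (hasDerivAt_const ρ (-(Real.pi * e ^ 2))).div
      ((hasDerivAt_pow 2 ρ).add_const (e ^ 2)) h0
    refine h1.congr_deriv ?_
    field_simp
    norm_num
    ring
  rw [restrict_Ioo_eq_restrict_Ioc, ← ofReal_integral_eq_lintegral_ofReal,
    ← intervalIntegral.integral_of_le hr.le,
    intervalIntegral.integral_eq_sub_of_hasDerivAt (fun θ _ => hderiv θ)
      (hcont.intervalIntegrable _ _)]
  · apply ENNReal.ofReal_le_ofReal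
    have : -(Real.pi * e ^ 2) / (0 ^ 2 + e ^ 2) = - Real.pi := by field_simp; ring
    rw [this]
    have : 0 ≤ (Real.pi * e ^ 2) / (r ^ 2 + e ^ 2) := by positivity
    rw [neg_div]; linarith
  · exact (hcont.intervalIntegrable 0 r).1
  · filter_upwards [ae_restrict_mem measurableSet_Ioc] with ρ hρ
    have := hρ.1
    simp only [Pi.zero_apply]; positivity

lemma jac_of {v : R2 → R2} {x : R2} {L : Fin 2 → R2 →L[ℝ] ℝ}
    (h : ∀ i, HasFDerivAt (fun y => v y i) (L i) x) (i j : Fin 2) :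
    jacobianMatrix v x i j = L i (EuclideanSpace.single j 1) := by
  have hd : DifferentiableAt ℝ v x := by
    rw [differentiableAt_euclidean]
    exact fun i => (h i).differentiableAt
  have h1 : HasFDerivAt (fun y => v y i)
      ((EuclideanSpace.proj (𝕜 := ℝ) i : R2 →L[ℝ] ℝ).comp (fderiv ℝ v x)) x :=
    (EuclideanSpace.proj (𝕜 := ℝ) i : R2 →L[ℝ] ℝ).hasFDerivAt.comp x hd.hasFDerivAt
  have := (h i).unique h1
  rw [this]
  simp [jacobianMatrix]

/-- The linear form with components `a`, `b`. -/
def lf (a b : ℝ) : R2 →L[ℝ] ℝ :=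
  a • (EuclideanSpace.proj (𝕜 := ℝ) (0 : Fin 2) : R2 →L[ℝ] ℝ) +
  b • (EuclideanSpace.proj (𝕜 := ℝ) (1 : Fin 2) : R2 →L[ℝ] ℝ)

lemma lf_apply (a b : ℝ) (y : R2) : lf a b y = a * y 0 + b * y 1 := by simp [lf]
lemma lf_zero (a b : ℝ) : lf a b (EuclideanSpace.single 0 1) = a := by simp [lf]
lemma lf_one (a b : ℝ) : lf a b (EuclideanSpace.single 1 1) = b := by simp [lf]

lemma hasF_x0 (x : R2) : HasFDerivAt (fun y : R2 => y 0) (lf 1 0) x := by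
  have := (EuclideanSpace.proj (𝕜 := ℝ) (0 : Fin 2) : R2 →L[ℝ] ℝ).hasFDerivAt (x := x)
  refine this.congr_fderiv ?_
  ext y; simp [lf]

lemma hasF_x1 (x : R2) : HasFDerivAt (fun y : R2 => y 1) (lf 0 1) x := by
  have := (EuclideanSpace.proj (𝕜 := ℝ) (1 : Fin 2) : R2 →L[ℝ] ℝ).hasFDerivAt (x := x)
  refine this.congr_fderiv ?_
  ext y; simp [lf]

lemma hasF_Rr {e : ℝ} (he : 0 < e) (x : R2) :
    HasFDerivAt (Rr e) (lf (x 0 / Rr e x) (x 1 / Rr e x)) x := by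
  have h := Rr_pos he x
  have h1 : HasFDerivAt (fun y : R2 => y 0 ^ 2 + y 1 ^ 2 + e ^ 2) _ x :=
    (((hasF_x0 x).pow 2).add ((hasF_x1 x).pow 2)).add_const (e ^ 2)
  have h2 := h1.sqrt (by positivity)
  refine h2.congr_fderiv ?_
  ext y
  change _ = lf _ _ y
  rw [lf_apply]
  simp [lf_apply]
  rw [show Real.sqrt (x 0 ^ 2 + x 1 ^ 2 + e ^ 2) = Rr e x from rfl]
  field_simp

lemma contDiff_Rr {e : ℝ} (he : 0 < e) : ContDiff ℝ 1 (Rr e) := by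
  unfold Rr
  refine ContDiff.sqrt (by fun_prop) fun x => by positivity

/-! ### Construction A -/

def vA (e : ℝ) (x : R2) : R2 := (Rr e x)⁻¹ • x

lemma contDiff_vA {e : ℝ} (he : 0 < e) : ContDiff ℝ 1 (vA e) := by
  unfold vA
  exact ((contDiff_Rr he).inv fun x => (Rr_pos he x).ne').smul contDiff_id

lemma hasF_vA {e : ℝ} (he : 0 < e) (x : R2) (i : Fin 2) :
    HasFDerivAt (fun y => vA e y i)
      (lf ((if i = 0 then 1 else 0) / Rr e x - x i * x 0 / Rr e x ^ 3)
        ((if i = 1 then 1 else 0) / Rr e x - x i * x 1 / Rr e x ^ 3)) x := by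
  have h := Rr_pos he x
  have hR := hasF_Rr he x
  have hinv : HasFDerivAt (fun y => (Rr e y)⁻¹) _ x :=
    ((hasDerivAt_inv h.ne').comp_hasFDerivAt x hR)
  have hi : HasFDerivAt (fun y : R2 => y i)
      (lf (if i = 0 then 1 else 0) (if i = 1 then 1 else 0)) x := by
    fin_cases i
    · simpa using hasF_x0 x
    · simpa using hasF_x1 x
  have h2 : HasFDerivAt (fun y : R2 => (Rr e y)⁻¹ * y i) _ x := hinv.mul hi
  refine h2.congr_fderiv ?_
  ext y
  change _ = lf _ _ y
  simp only [lf_apply, add_apply, smul_apply, smul_eq_mul]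
  field_simp
  ring

lemma jac_vA {e : ℝ} (he : 0 < e) (x : R2) (i j : Fin 2) :
    jacobianMatrix (vA e) x i j =
      (if i = j then 1 else 0) / Rr e x - x i * x j / Rr e x ^ 3 := by
  rw [jac_of (hasF_vA he x)]
  fin_cases j
  · exact lf_zero _ _
  · exact lf_one _ _

lemma area_vA {e : ℝ} (he : 0 < e) (x : R2) :
    1 + (∑ i, ∑ j, (jacobianMatrix (vA e) x i j) ^ 2) + (jacobianMatrix (vA e) x).det ^ 2 =
      1 + ((Rr e x)⁻¹ ^ 2 + (e ^ 2 / Rr e x ^ 3) ^ 2) + (e ^ 2 / Rr e x ^ 4) ^ 2 := by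
  have h := Rr_pos he x
  have hs := Rr_sq e x
  have he2 : e ^ 2 = Rr e x ^ 2 - x 0 ^ 2 - x 1 ^ 2 := by linarith
  rw [Matrix.det_fin_two]
  simp only [Fin.sum_univ_two, jac_vA he, he2]
  simp
  field_simp
  ring

/-! ### Construction B -/

def psi (e : ℝ) (x : R2) : ℝ := 2 * Real.arctan (x 1 / (Rr e x + x 0))

def vB (e : ℝ) (x : R2) : R2 := !₂[Real.cos (psi e x), Real.sin (psi e x)]

lemma contDiff_psi {e : ℝ} (he : 0 < e) : ContDiff ℝ 1 (psi e) := by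
  unfold psi
  refine contDiff_const.mul (ContDiff.arctan (ContDiff.div (by fun_prop)
    ((contDiff_Rr he).add (by fun_prop)) fun x => (abs_x0_lt he x).ne'))

lemma contDiff_vB {e : ℝ} (he : 0 < e) : ContDiff ℝ 1 (vB e) := by
  rw [contDiff_euclidean]
  intro i
  fin_cases i
  · exact Real.contDiff_cos.comp (contDiff_psi he)
  · exact Real.contDiff_sin.comp (contDiff_psi he)

/-- the two components of the gradient of `psi` -/
def gx (e : ℝ) (x : R2) : ℝ := -2 * x 1 * (Rr e x + x 0) / (Rr e x * Dd e x)
def gy (e : ℝ) (x : R2) : ℝ := 2 * (Rr e x ^ 2 + x 0 * Rr e x - x 1 ^ 2) / (Rr e x * Dd e x)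

lemma hasF_psi {e : ℝ} (he : 0 < e) (x : R2) :
    HasFDerivAt (psi e) (lf (gx e x) (gy e x)) x := by
  have h := Rr_pos he x
  have hR := hasF_Rr he x
  have hp := abs_x0_lt he x
  have hD := Dd_pos he x
  have hinv : HasFDerivAt (fun y => (Rr e y + y 0)⁻¹) _ x :=
    ((hasDerivAt_inv hp.ne').comp_hasFDerivAt x (hR.add (hasF_x0 x)))
  have h2 : HasFDerivAt (fun y : R2 => y 1 * (Rr e y + y 0)⁻¹) _ x := (hasF_x1 x).mul hinv
  have h3 : HasFDerivAt (fun y : R2 => 2 * Real.arctan (y 1 * (Rr e y + y 0)⁻¹)) _ x :=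
    (h2.arctan).const_mul 2
  have h4 : psi e = (fun y : R2 => 2 * Real.arctan (y 1 * (Rr e y + y 0)⁻¹)) := by
    ext y; simp [psi, div_eq_mul_inv]
  rw [h4]
  refine h3.congr_fderiv ?_
  ext y
  change _ = lf _ _ y
  simp only [lf_apply, add_apply, smul_apply, smul_eq_mul]
  have h5 : 1 + (x 1 * (Rr e x + x 0)⁻¹) ^ 2 = Dd e x / (Rr e x + x 0) ^ 2 := by
    unfold Dd; field_simp
  rw [h5]
  unfold gx gy
  field_simp
  ring

lemma jac_vB {e : ℝ} (he : 0 < e) (x : R2) (i j : Fin 2) :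
    jacobianMatrix (vB e) x i j =
      (if i = 0 then - Real.sin (psi e x) else Real.cos (psi e x)) *
      (if j = 0 then gx e x else gy e x) := by
  have hF : ∀ i : Fin 2, HasFDerivAt (fun y => vB e y i)
      ((if i = 0 then - Real.sin (psi e x) else Real.cos (psi e x)) • lf (gx e x) (gy e x)) x := by
    intro i
    fin_cases i
    · exact (hasF_psi he x).cos
    · exact (hasF_psi he x).sin
  rw [jac_of hF, smul_apply, smul_eq_mul]
  congr 1
  fin_cases j
  · exact lf_zero _ _
  · exact lf_one _ _

lemma area_vB {e : ℝ} (he : 0 < e) {x : R2} (hx : x ≠ 0) :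
    1 + (∑ i, ∑ j, (jacobianMatrix (vB e) x i j) ^ 2) + (jacobianMatrix (vB e) x).det ^ 2 =
      1 + ((‖x‖⁻¹ - e ^ 2 / (‖x‖ * Dd e x)) ^ 2 +
        (2 * |x 1| * e ^ 2 / (Rr e x * Dd e x * ‖x‖)) ^ 2) := by
  have h := Rr_pos he x
  have hs := Rr_sq e x
  have hD := Dd_pos he x
  have hn : 0 < ‖x‖ := norm_pos_iff.2 hx
  have hn2 := norm_sq_R2 x
  have hD2 : Dd e x = 2 * Rr e x ^ 2 + 2 * Rr e x * x 0 - e ^ 2 := by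
    unfold Dd; linear_combination -hs
  have h1 : x 0 * gy e x - x 1 * gx e x = 1 - e ^ 2 / Dd e x := by
    unfold gx gy
    field_simp
    rw [hD2]
    linear_combination (-2 * Rr e x) * hs
  have h2 : x 0 * gx e x + x 1 * gy e x = 2 * x 1 * e ^ 2 / (Rr e x * Dd e x) := by
    unfold gx gy
    field_simp
    linear_combination (x 1) * hs
  have h3 : ‖x‖ ^ 2 * (gx e x ^ 2 + gy e x ^ 2) = (1 - e ^ 2 / Dd e x) ^ 2 +
      (2 * x 1 * e ^ 2 / (Rr e x * Dd e x)) ^ 2 := by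
    rw [← h1, ← h2, hn2]; ring
  have h4 : gx e x ^ 2 + gy e x ^ 2 = (‖x‖⁻¹ - e ^ 2 / (‖x‖ * Dd e x)) ^ 2 +
        (2 * |x 1| * e ^ 2 / (Rr e x * Dd e x * ‖x‖)) ^ 2 := by
    have : gx e x ^ 2 + gy e x ^ 2 = ((1 - e ^ 2 / Dd e x) ^ 2 +
      (2 * x 1 * e ^ 2 / (Rr e x * Dd e x)) ^ 2) / ‖x‖ ^ 2 := by
      rw [← h3]; field_simp
    have habs : ∀ c d : ℝ, (2 * |x 1| * c / d) ^ 2 = (2 * x 1 * c / d) ^ 2 := by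
      intro c d
      rw [div_pow, mul_pow, mul_pow, sq_abs]; ring
    rw [this, habs]
    field_simp
  rw [Matrix.det_fin_two]
  simp only [Fin.sum_univ_two, jac_vB he]
  rw [← h4]
  simp
  linear_combination (gx e x ^ 2 + gy e x ^ 2) * Real.sin_sq_add_cos_sq (psi e x)

def eps (k : ℕ) : ℝ := 1 / ((k : ℝ) + 1)

lemma eps_pos (k : ℕ) : 0 < eps k := by unfold eps; positivity

lemma tendsto_eps : Tendsto eps atTop (𝓝 0) := tendsto_one_div_add_atTop_nhds_zero_nat

lemma tendsto_Rr (x : R2) : Tendsto (fun k => Rr (eps k) x) atTop (𝓝 ‖x‖) := by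
  have hn : ‖x‖ = Real.sqrt (x 0 ^ 2 + x 1 ^ 2 + 0 ^ 2) := by
    rw [← norm_sq_R2]; simp
  rw [hn]
  unfold Rr
  exact (Real.continuous_sqrt.tendsto _).comp ((tendsto_eps.pow 2).const_add _)

lemma ae_x1 : ∀ᵐ x : R2, x 1 ≠ 0 := by
  let S : Submodule ℝ R2 := LinearMap.ker
    ((EuclideanSpace.proj (𝕜 := ℝ) (1 : Fin 2) : R2 →L[ℝ] ℝ) : R2 →ₗ[ℝ] ℝ)
  have hS : S ≠ ⊤ := by
    intro h
    have : (EuclideanSpace.single 1 1 : R2) ∈ S := h ▸ Submodule.mem_top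
    simp [S] at this
  have h0 := Measure.addHaar_submodule (volume : Measure R2) S hS
  rw [ae_iff]
  convert h0 using 2
  ext x
  simp [S]

lemma ne_zero_of_x1 {x : R2} (h : x 1 ≠ 0) : x ≠ 0 := by
  rintro rfl; simp at h

lemma ae_ne_zero : ∀ᵐ x : R2, x ≠ 0 := ae_x1.mono fun _ h => ne_zero_of_x1 h

lemma abs_coord_le (x : R2) (i : Fin 2) : |x i| ≤ ‖x‖ := by
  simpa using PiLp.norm_apply_le x i

lemma bound_entry {x : R2} {R c : ℝ} (hR : 0 < R) (hx : ‖x‖ ≤ R) (hc : |c| ≤ 1) (i j : Fin 2) :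
    |c / R - x i * x j / R ^ 3| ≤ 2 * R⁻¹ := by
  have h1 : |c / R| ≤ R⁻¹ := by
    rw [abs_div, abs_of_pos hR, div_eq_mul_inv]
    exact mul_le_of_le_one_left (by positivity) hc
  have h2 : |x i * x j / R ^ 3| ≤ R⁻¹ := by
    rw [abs_div, abs_mul, abs_of_pos (by positivity : 0 < R ^ 3), div_le_iff₀ (by positivity)]
    have : R⁻¹ * R ^ 3 = R * R := by field_simp
    rw [this]
    exact mul_le_mul ((abs_coord_le x i).trans hx) ((abs_coord_le x j).trans hx)
      (abs_nonneg _) hR.le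
  have := abs_sub (c / R) (x i * x j / R ^ 3)
  linarith

lemma abs_ite_le (p : Prop) [Decidable p] : |(if p then 1 else 0 : ℝ)| ≤ 1 := by
  split_ifs <;> simp

/-- The (weak) gradient of the vortex map. -/
def Gv (x : R2) : Matrix (Fin 2) (Fin 2) ℝ :=
  Matrix.of fun i j => (if i = j then 1 else 0) / ‖x‖ - x i * x j / ‖x‖ ^ 3

lemma norm_vA_le {e : ℝ} (he : 0 < e) (x : R2) : ‖vA e x‖ ≤ 1 := by
  have h := Rr_pos he x
  rw [vA, norm_smul, norm_inv, Real.norm_of_nonneg h.le, inv_mul_le_iff₀ h, mul_one]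
  exact norm_le_Rr e x

lemma measurable_u : Measurable (fun x : R2 => ‖x‖⁻¹ • x) := by fun_prop

lemma norm_u_le (x : R2) : ‖(‖x‖⁻¹ • x : R2)‖ ≤ 1 := by
  rw [norm_smul, norm_inv, norm_norm]; exact inv_mul_le_one

lemma integrableOn_u (r : ℝ) : IntegrableOn (fun x : R2 => ‖x‖⁻¹ • x) (ball 0 r) := by
  refine Measure.integrableOn_of_bounded (M := 1) measure_ball_lt_top.ne
    measurable_u.aestronglyMeasurable (ae_of_all _ norm_u_le)

lemma measurable_Gv (i j : Fin 2) : Measurable (fun x => Gv x i j) := by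
  unfold Gv
  simp only [Matrix.of_apply]
  fun_prop

lemma tendsto_vA {x : R2} (hx : x ≠ 0) :
    Tendsto (fun k => vA (eps k) x) atTop (𝓝 (‖x‖⁻¹ • x)) :=
  ((tendsto_Rr x).inv₀ (norm_ne_zero_iff.2 hx)).smul_const x

lemma memW11_u (r : ℝ) : MemW11 (ball (0 : R2) r) (fun x => ‖x‖⁻¹ • x) Gv := by
  have hGb : ∀ i j, ∀ x : R2, x ≠ 0 → |Gv x i j| ≤ 2 * ‖x‖⁻¹ := fun i j x hx =>
    bound_entry (norm_pos_iff.2 hx) le_rfl (abs_ite_le _) i j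
  have hint := (integrableOn_inv_norm r).const_mul 2
  refine ⟨integrableOn_u r, fun i j => ?_, ?_⟩
  · refine Integrable.mono' hint (measurable_Gv i j).aestronglyMeasurable ?_
    exact (ae_restrict_of_ae ae_ne_zero).mono fun x hx => hGb i j x hx
  intro φ hφ hφc hφs i j
  have hφ' : Continuous (fun x => fderiv ℝ φ x (EuclideanSpace.single j 1)) :=
    (hφ.continuous_fderiv (by simp)).clm_apply continuous_const
  have hφ'c : HasCompactSupport (fun x => fderiv ℝ φ x (EuclideanSpace.single j 1)) :=
    hφc.fderiv_apply ℝ _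
  have hz : ∀ x ∉ ball (0 : R2) r, φ x = 0 := fun x hx =>
    image_eq_zero_of_notMem_tsupport fun h => hx (hφs h)
  have hz' : ∀ x ∉ ball (0 : R2) r, fderiv ℝ φ x (EuclideanSpace.single j 1) = 0 := by
    intro x hx
    have : fderiv ℝ φ x = 0 := by
      by_contra hne
      exact hx (hφs (support_fderiv_subset ℝ (Function.mem_support.2 hne)))
    simp [this]
  have hk : ∀ k, (∫ x in ball (0 : R2) r,
      vA (eps k) x i * fderiv ℝ φ x (EuclideanSpace.single j 1)) =
      - ∫ x in ball (0 : R2) r, jacobianMatrix (vA (eps k)) x i j * φ x := by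
    intro k
    have he := eps_pos k
    have hcd : ContDiff ℝ 1 (fun y => vA (eps k) y i) := contDiff_euclidean.1 (contDiff_vA he) i
    have hj : ∀ x, fderiv ℝ (fun y => vA (eps k) y i) x (EuclideanSpace.single j 1) =
        jacobianMatrix (vA (eps k)) x i j := by
      intro x
      rw [jac_of (hasF_vA he x), (hasF_vA he x i).fderiv]
    have hc1 : Continuous (fun x => fderiv ℝ (fun y => vA (eps k) y i) x
        (EuclideanSpace.single j 1)) :=
      (hcd.continuous_fderiv (by simp)).clm_apply continuous_const
    rw [setIntegral_eq_integral_of_forall_compl_eq_zero (fun x hx => by rw [hz' x hx, mul_zero]),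
      setIntegral_eq_integral_of_forall_compl_eq_zero (fun x hx => by rw [hz x hx, mul_zero])]
    simp only [← hj]
    apply integral_mul_fderiv_eq_neg_fderiv_mul_of_integrable
    · exact (hc1.mul hφ.continuous).integrable_of_hasCompactSupport hφc.mul_left
    · exact (hcd.continuous.mul hφ').integrable_of_hasCompactSupport hφ'c.mul_left
    · exact (hcd.continuous.mul hφ.continuous).integrable_of_hasCompactSupport hφc.mul_left
    · exact fun x _ => (hcd.differentiable (by simp)) x
    · exact fun x _ => (hφ.differentiable (by simp)) x
  obtain ⟨C, hC⟩ := hφc.exists_bound_of_continuous hφ.continuous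
  have hL : Tendsto (fun k => ∫ x in ball (0 : R2) r,
      vA (eps k) x i * fderiv ℝ φ x (EuclideanSpace.single j 1)) atTop
      (𝓝 (∫ x in ball (0 : R2) r, (‖x‖⁻¹ • x) i * fderiv ℝ φ x (EuclideanSpace.single j 1))) := by
    refine tendsto_integral_of_dominated_convergence
      (fun x => ‖fderiv ℝ φ x (EuclideanSpace.single j 1)‖) ?_ ?_ ?_ ?_
    · intro k
      have := (contDiff_euclidean.1 (contDiff_vA (eps_pos k)) i).continuous
      exact (this.mul hφ').aestronglyMeasurable
    · exact ((hφ'.integrable_of_hasCompactSupport hφ'c).norm).integrableOn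
    · intro k
      refine ae_of_all _ fun x => ?_
      rw [norm_mul]
      refine mul_le_of_le_one_left (norm_nonneg _) ?_
      exact (abs_coord_le _ i).trans (norm_vA_le (eps_pos k) x)
    · refine (ae_restrict_of_ae ae_ne_zero).mono fun x hx => ?_
      have := ((EuclideanSpace.proj (𝕜 := ℝ) i : R2 →L[ℝ] ℝ).continuous.tendsto _).comp
        (tendsto_vA hx)
      exact Tendsto.mul_const _ this
  have hRt : Tendsto (fun k => - ∫ x in ball (0 : R2) r,
      jacobianMatrix (vA (eps k)) x i j * φ x) atTop
      (𝓝 (- ∫ x in ball (0 : R2) r, Gv x i j * φ x)) := by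
    refine (tendsto_integral_of_dominated_convergence
      (fun x => 2 * ‖x‖⁻¹ * C) ?_ ?_ ?_ ?_).neg
    · intro k
      have h1 := measurable_Rr (eps k)
      have h2 := hφ.continuous.measurable
      simp only [jac_vA (eps_pos k)]
      exact Measurable.aestronglyMeasurable (by fun_prop)
    · exact hint.mul_const C
    · intro k
      refine (ae_restrict_of_ae ae_ne_zero).mono fun x hx => ?_
      rw [norm_mul, jac_vA (eps_pos k)]
      refine mul_le_mul ?_ (hC x) (norm_nonneg _) (by positivity)
      refine (bound_entry (Rr_pos (eps_pos k) x) (norm_le_Rr _ x) (abs_ite_le _) i j).trans ?_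
      have := inv_anti₀ (norm_pos_iff.2 hx) (norm_le_Rr (eps k) x)
      linarith
    · refine (ae_restrict_of_ae ae_ne_zero).mono fun x hx => ?_
      simp only [jac_vA (eps_pos _)]
      have hn := norm_ne_zero_iff.2 hx
      refine Tendsto.mul_const _ ?_
      exact (tendsto_const_nhds.div (tendsto_Rr x) hn).sub
        (tendsto_const_nhds.div ((tendsto_Rr x).pow 3) (pow_ne_zero 3 hn))
  refine tendsto_nhds_unique hL ?_
  simpa only [hk] using hRt

lemma sqrt_bound {i p q a : ℝ} (hp : 0 ≤ p) (hq : 0 ≤ q)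
    (ha : a ≤ 1 + i ^ 2 + p ^ 2 + q ^ 2) :
    Real.sqrt a ≤ Real.sqrt (1 + i ^ 2) + p + q := by
  have h0 := Real.sqrt_nonneg (1 + i ^ 2)
  have h1 := Real.sq_sqrt (by positivity : 0 ≤ 1 + i ^ 2)
  apply Real.sqrt_le_iff.2 ⟨by positivity, ?_⟩
  nlinarith [mul_nonneg h0 hp, mul_nonneg h0 hq, mul_nonneg hp hq]

lemma integrableOn_area (r : ℝ) :
    IntegrableOn (fun x : R2 => Real.sqrt (1 + 1 / ‖x‖ ^ 2)) (ball 0 r) := by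
  have h1 : IntegrableOn (fun _ : R2 => (1 : ℝ)) (ball 0 r) :=
    integrableOn_const measure_ball_lt_top.ne
  refine Integrable.mono' (h1.add (integrableOn_inv_norm r))
    (Measurable.aestronglyMeasurable (by fun_prop)) (ae_of_all _ fun x => ?_)
  rw [Real.norm_of_nonneg (Real.sqrt_nonneg _)]
  apply Real.sqrt_le_iff.2
  have : 0 ≤ ‖x‖⁻¹ := by positivity
  simp only [Pi.add_apply]
  refine ⟨by positivity, ?_⟩
  have h2 : 1 / ‖x‖ ^ 2 = ‖x‖⁻¹ ^ 2 := by rw [inv_pow, one_div]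
  rw [h2]; nlinarith

lemma relaxed_le (r : ℝ) (v : ℕ → R2 → R2) (P Q : ℕ → R2 → ℝ) (c : ℝ≥0∞)
    (hv : ∀ k, ContDiff ℝ 1 (v k)) (hb : ∀ k x, ‖v k x‖ ≤ 1)
    (hlim : ∀ᵐ x, Tendsto (fun k => v k x) atTop (𝓝 (‖x‖⁻¹ • x)))
    (hQm : ∀ k, Measurable (Q k)) (hPm : ∀ k, Measurable (P k))
    (hP : ∀ k, ∫⁻ x in ball 0 r, ENNReal.ofReal (P k x) ≤ c)
    (hQ : ∀ k x, x ≠ 0 → Q k x ≤ 4 * ‖x‖⁻¹)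
    (hQlim : ∀ᵐ x, Tendsto (fun k => Q k x) atTop (𝓝 0))
    (hA : ∀ k x, x ≠ 0 →
      Real.sqrt (1 + (∑ i, ∑ j, (jacobianMatrix (v k) x i j) ^ 2) +
        (jacobianMatrix (v k) x).det ^ 2) ≤ Real.sqrt (1 + 1 / ‖x‖ ^ 2) + P k x + Q k x) :
    relaxedArea (fun x => ‖x‖⁻¹ • x) (ball (0 : R2) r) ≤
      ENNReal.ofReal (∫ x in ball (0 : R2) r, Real.sqrt (1 + 1 / ‖x‖ ^ 2)) + c := by
  set I := ENNReal.ofReal (∫ x in ball (0 : R2) r, Real.sqrt (1 + 1 / ‖x‖ ^ 2)) with hI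
  have hIl : I = ∫⁻ x in ball (0 : R2) r, ENNReal.ofReal (Real.sqrt (1 + 1 / ‖x‖ ^ 2)) :=
    ofReal_integral_eq_lintegral_ofReal (integrableOn_area r)
      (ae_of_all _ fun x => Real.sqrt_nonneg _)
  have harea : ∀ k, classicalArea (ball 0 r) (v k) ≤
      I + c + ∫⁻ x in ball (0 : R2) r, ENNReal.ofReal (Q k x) := by
    intro k
    have h1 := hPm k
    have h2 := hQm k
    calc classicalArea (ball 0 r) (v k)
        ≤ ∫⁻ x in ball (0 : R2) r, (ENNReal.ofReal (Real.sqrt (1 + 1 / ‖x‖ ^ 2)) +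
          ENNReal.ofReal (P k x) + ENNReal.ofReal (Q k x)) := by
          refine lintegral_mono_ae ((ae_restrict_of_ae ae_ne_zero).mono fun x hx => ?_)
          refine (ENNReal.ofReal_le_ofReal (hA k x hx)).trans ?_
          refine ENNReal.ofReal_add_le.trans ?_
          gcongr
          exact ENNReal.ofReal_add_le
      _ = I + (∫⁻ x in ball (0 : R2) r, ENNReal.ofReal (P k x)) +
          ∫⁻ x in ball (0 : R2) r, ENNReal.ofReal (Q k x) := by
          rw [lintegral_add_right _ (by fun_prop), lintegral_add_right _ (by fun_prop), hIl]
      _ ≤ _ := by gcongr; exact hP k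
  have hQ0 : Tendsto (fun k => ∫⁻ x in ball (0 : R2) r, ENNReal.ofReal (Q k x)) atTop (𝓝 0) := by
    have := tendsto_lintegral_of_dominated_convergence
      (μ := volume.restrict (ball (0 : R2) r)) (F := fun k x => ENNReal.ofReal (Q k x))
      (f := fun _ => 0) (fun x => ENNReal.ofReal (4 * ‖x‖⁻¹))
      (fun k => (hQm k).ennreal_ofReal)
      (fun k => (ae_restrict_of_ae ae_ne_zero).mono fun x hx => ENNReal.ofReal_le_ofReal (hQ k x hx))
      ?_ ?_
    · simpa using this
    · exact ((integrableOn_inv_norm r).const_mul 4).lintegral_lt_top.ne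
    · refine (ae_restrict_of_ae hQlim).mono fun x hx => ?_
      simpa using ENNReal.tendsto_ofReal hx
  have hdiff : ∀ k x, ‖v k x - ‖x‖⁻¹ • x‖ ≤ 2 := fun k x => by
    have := norm_sub_le (v k x) (‖x‖⁻¹ • x)
    linarith [hb k x, norm_u_le x]
  have hmeas : ∀ k, AEStronglyMeasurable (fun x => v k x - ‖x‖⁻¹ • x)
      (volume.restrict (ball (0 : R2) r)) := fun k =>
    ((hv k).continuous.measurable.sub measurable_u).aestronglyMeasurable
  refine le_trans (sInf_le ⟨v, fun k => (hv k).contDiffOn, fun k => ?_, ?_, rfl⟩) ?_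
  · exact Measure.integrableOn_of_bounded (M := 2) measure_ball_lt_top.ne
      ((hv k).continuous.measurable.sub measurable_u).aestronglyMeasurable (ae_of_all _ (hdiff k))
  · have := tendsto_integral_of_dominated_convergence
      (μ := volume.restrict (ball (0 : R2) r)) (F := fun k x => ‖v k x - ‖x‖⁻¹ • x‖)
      (f := fun _ => 0) (fun x => 2) (fun k => (hmeas k).norm)
      (integrableOn_const measure_ball_lt_top.ne)
      (fun k => ae_of_all _ fun x => by simpa using hdiff k x)
      ((ae_restrict_of_ae hlim).mono fun x hx => by
        simpa using (hx.sub_const (‖x‖⁻¹ • x)).norm)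
    simpa using this
  · have hT := hQ0.const_add (I + c)
    rw [add_zero] at hT
    calc _ ≤ liminf (fun k => I + c + ∫⁻ x in ball (0 : R2) r, ENNReal.ofReal (Q k x)) atTop :=
          liminf_le_liminf (Eventually.of_forall harea)
      _ = _ := hT.liminf_eq

lemma relaxed_A (r : ℝ) (hr : 0 < r) :
    relaxedArea (fun x => ‖x‖⁻¹ • x) (ball (0 : R2) r) ≤
      ENNReal.ofReal (∫ x in ball (0 : R2) r, Real.sqrt (1 + 1 / ‖x‖ ^ 2)) +
        ENNReal.ofReal Real.pi := by
  have hm := fun k => measurable_Rr (eps k)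
  refine relaxed_le r (fun k => vA (eps k)) (fun k x => eps k ^ 2 / Rr (eps k) x ^ 4)
    (fun k x => eps k ^ 2 / Rr (eps k) x ^ 3) _ (fun k => contDiff_vA (eps_pos k))
    (fun k => norm_vA_le (eps_pos k)) (ae_ne_zero.mono fun x hx => tendsto_vA hx)
    (fun k => by fun_prop) (fun k => by fun_prop) (fun k => lintegral_disc r _ hr (eps_pos k))
    ?_ ?_ ?_
  · intro k x hx
    have h := Rr_pos (eps_pos k) x
    have h1 := inv_anti₀ (norm_pos_iff.2 hx) (norm_le_Rr (eps k) x)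
    have h2 : eps k ^ 2 / Rr (eps k) x ^ 3 ≤ (Rr (eps k) x)⁻¹ := by
      rw [div_le_iff₀ (by positivity)]
      have : (Rr (eps k) x)⁻¹ * Rr (eps k) x ^ 3 = Rr (eps k) x ^ 2 := by field_simp
      rw [this, Rr_sq]; nlinarith [sq_nonneg (x 0), sq_nonneg (x 1)]
    have : 0 ≤ ‖x‖⁻¹ := by positivity
    change eps k ^ 2 / Rr (eps k) x ^ 3 ≤ _
    linarith
  · refine ae_ne_zero.mono fun x hx => ?_
    have hn := norm_ne_zero_iff.2 hx
    have := (tendsto_eps.pow 2).div ((tendsto_Rr x).pow 3) (pow_ne_zero 3 hn)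
    rw [zero_pow two_ne_zero, zero_div] at this
    exact this
  · intro k x hx
    have h := Rr_pos (eps_pos k) x
    have h1 := inv_anti₀ (norm_pos_iff.2 hx) (norm_le_Rr (eps k) x)
    rw [area_vA (eps_pos k), one_div, ← inv_pow]
    refine sqrt_bound (by positivity) (by positivity) ?_
    have : (Rr (eps k) x)⁻¹ ^ 2 ≤ ‖x‖⁻¹ ^ 2 := by gcongr
    linarith

lemma norm_vB (e : ℝ) (x : R2) : ‖vB e x‖ = 1 := by
  have h := norm_sq_R2 (vB e x)
  have h2 : ‖vB e x‖ ^ 2 = 1 := by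
    rw [h]; exact Real.cos_sq_add_sin_sq _
  nlinarith [norm_nonneg (vB e x)]

lemma vB_zero {e : ℝ} (he : 0 < e) (x : R2) :
    vB e x 0 = ((Rr e x + x 0) ^ 2 - x 1 ^ 2) / Dd e x := by
  have hp := abs_x0_lt he x
  have hD := Dd_pos he x
  change Real.cos (2 * Real.arctan (x 1 / (Rr e x + x 0))) = _
  rw [Real.cos_two_mul, Real.cos_sq_arctan]
  have : 1 + (x 1 / (Rr e x + x 0)) ^ 2 = Dd e x / (Rr e x + x 0) ^ 2 := by
    unfold Dd; field_simp
  rw [this]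
  field_simp
  unfold Dd; ring

lemma vB_one {e : ℝ} (he : 0 < e) (x : R2) :
    vB e x 1 = 2 * x 1 * (Rr e x + x 0) / Dd e x := by
  have hp := abs_x0_lt he x
  have hD := Dd_pos he x
  change Real.sin (2 * Real.arctan (x 1 / (Rr e x + x 0))) = _
  have h1 : Real.sin (Real.arctan (x 1 / (Rr e x + x 0))) =
      (x 1 / (Rr e x + x 0)) * Real.cos (Real.arctan (x 1 / (Rr e x + x 0))) := by
    conv_rhs => rw [← Real.tan_arctan (x 1 / (Rr e x + x 0))]
    rw [Real.arctan_tan (Real.neg_pi_div_two_lt_arctan _) (Real.arctan_lt_pi_div_two _),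
      Real.tan_mul_cos (Real.cos_arctan_pos _).ne']
  rw [Real.sin_two_mul, h1]
  have h2 := Real.cos_sq_arctan (x 1 / (Rr e x + x 0))
  have : 1 + (x 1 / (Rr e x + x 0)) ^ 2 = Dd e x / (Rr e x + x 0) ^ 2 := by
    unfold Dd; field_simp
  rw [this] at h2
  have h3 : 2 * (x 1 / (Rr e x + x 0) * Real.cos (Real.arctan (x 1 / (Rr e x + x 0)))) *
     Real.cos (Real.arctan (x 1 / (Rr e x + x 0))) = 2 * (x 1 / (Rr e x + x 0)) *
      Real.cos (Real.arctan (x 1 / (Rr e x + x 0))) ^ 2 := by ring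
  rw [h3, h2]
  field_simp

lemma tendsto_vB {x : R2} (hx : x 1 ≠ 0) :
    Tendsto (fun k => vB (eps k) x) atTop (𝓝 (‖x‖⁻¹ • x)) := by
  have hR := tendsto_Rr x
  have hn2 := norm_sq_R2 x
  have hn : 0 < ‖x‖ := norm_pos_iff.2 (ne_zero_of_x1 hx)
  have hy : 0 < x 1 ^ 2 := by positivity
  have hD : Tendsto (fun k => Dd (eps k) x) atTop (𝓝 ((‖x‖ + x 0) ^ 2 + x 1 ^ 2)) :=
    ((hR.add_const _).pow 2).add_const _
  have hD0 : (‖x‖ + x 0) ^ 2 + x 1 ^ 2 ≠ 0 := by positivity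
  have h0 : Tendsto (fun k => vB (eps k) x 0) atTop (𝓝 (‖x‖⁻¹ * x 0)) := by
    simp only [vB_zero (eps_pos _)]
    have h := (((hR.add_const (x 0)).pow 2).sub_const (x 1 ^ 2)).div hD hD0
    have hl : ‖x‖⁻¹ * x 0 =
        ((‖x‖ + x 0) ^ 2 - x 1 ^ 2) / ((‖x‖ + x 0) ^ 2 + x 1 ^ 2) := by
      field_simp
      linear_combination (-(x 0) - ‖x‖) * hn2
    rw [hl]; exact h
  have h1 : Tendsto (fun k => vB (eps k) x 1) atTop (𝓝 (‖x‖⁻¹ * x 1)) := by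
    simp only [vB_one (eps_pos _)]
    have h := ((hR.add_const (x 0)).const_mul (2 * x 1)).div hD hD0
    have hl : ‖x‖⁻¹ * x 1 =
        2 * x 1 * (‖x‖ + x 0) / ((‖x‖ + x 0) ^ 2 + x 1 ^ 2) := by
      field_simp
      linear_combination (- 1) * hn2
    rw [hl]; exact h
  rw [tendsto_iff_norm_sub_tendsto_zero]
  have h2 : ∀ k, ‖vB (eps k) x - ‖x‖⁻¹ • x‖ = Real.sqrt ((vB (eps k) x 0 - ‖x‖⁻¹ * x 0) ^ 2 +
      (vB (eps k) x 1 - ‖x‖⁻¹ * x 1) ^ 2) := by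
    intro k
    rw [EuclideanSpace.norm_eq]
    simp [Fin.sum_univ_two]
  simp only [h2]
  have := (Real.continuous_sqrt.tendsto _).comp
    (((h0.sub_const (‖x‖⁻¹ * x 0)).pow 2).add ((h1.sub_const (‖x‖⁻¹ * x 1)).pow 2))
  simp only [sub_self, zero_pow two_ne_zero, add_zero, Real.sqrt_zero] at this
  exact this

lemma relaxed_B (r : ℝ) :
    relaxedArea (fun x => ‖x‖⁻¹ • x) (ball (0 : R2) r) ≤
      ENNReal.ofReal (∫ x in ball (0 : R2) r, Real.sqrt (1 + 1 / ‖x‖ ^ 2)) +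
        ENNReal.ofReal (2 * Real.pi * r) := by
  have hm := fun k => measurable_Rr (eps k)
  have hm' := fun k => measurable_Dd (eps k)
  refine relaxed_le r (fun k => vB (eps k)) (fun k x => eps k ^ 2 / (‖x‖ * Dd (eps k) x))
    (fun k x => 2 * |x 1| * eps k ^ 2 / (Rr (eps k) x * Dd (eps k) x * ‖x‖)) _
    (fun k => contDiff_vB (eps_pos k))
    (fun k x => (norm_vB _ x).le) (ae_x1.mono fun x hx => tendsto_vB hx)
    (fun k => by fun_prop) (fun k => by fun_prop) (fun k => (lintegral_wall r _ (eps_pos k)).le)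
    ?_ ?_ ?_
  · intro k x hx
    have he := eps_pos k
    have h := Rr_pos he x
    have hD := Dd_pos he x
    have hn : 0 < ‖x‖ := norm_pos_iff.2 hx
    have hle := norm_le_Rr (eps k) x
    have hs := Rr_sq (eps k) x
    rw [← norm_sq_R2] at hs
    have hx0 := neg_le_of_abs_le (abs_coord_le x 0)
    have h1 : |x 1| * (Rr (eps k) x - ‖x‖) ≤ Dd (eps k) x := by
      have h2 : (Rr (eps k) x - ‖x‖) ^ 2 ≤ (Rr (eps k) x + x 0) ^ 2 := by
        apply pow_le_pow_left₀ <;> linarith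
      have h3 : Dd (eps k) x = (Rr (eps k) x + x 0) ^ 2 + |x 1| ^ 2 := by
        rw [sq_abs]; rfl
      nlinarith [sq_nonneg (|x 1| - (Rr (eps k) x - ‖x‖)), sq_nonneg (|x 1|)]
    change 2 * |x 1| * eps k ^ 2 / (Rr (eps k) x * Dd (eps k) x * ‖x‖) ≤ _
    rw [div_le_iff₀ (by positivity)]
    have h4 : 4 * ‖x‖⁻¹ * (Rr (eps k) x * Dd (eps k) x * ‖x‖) =
      4 * Rr (eps k) x * Dd (eps k) x := by field_simp
    rw [h4]
    have h5 : eps k ^ 2 = (Rr (eps k) x - ‖x‖) * (Rr (eps k) x + ‖x‖) := by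
      linear_combination -hs
    calc 2 * |x 1| * eps k ^ 2 = (|x 1| * (Rr (eps k) x - ‖x‖)) * (2 * (Rr (eps k) x + ‖x‖)) := by
          rw [h5]; ring
      _ ≤ Dd (eps k) x * (2 * (Rr (eps k) x + Rr (eps k) x)) := by gcongr
      _ = _ := by ring
  · refine ae_x1.mono fun x hx => ?_
    have hn : 0 < ‖x‖ := norm_pos_iff.2 (ne_zero_of_x1 hx)
    have hD : Tendsto (fun k => Dd (eps k) x) atTop (𝓝 ((‖x‖ + x 0) ^ 2 + x 1 ^ 2)) :=
      (((tendsto_Rr x).add_const _).pow 2).add_const _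
    have hD0 : (‖x‖ + x 0) ^ 2 + x 1 ^ 2 ≠ 0 := by positivity
    have := ((tendsto_eps.pow 2).const_mul (2 * |x 1|)).div
      (((tendsto_Rr x).mul hD).mul_const ‖x‖) (by positivity)
    rw [zero_pow two_ne_zero, mul_zero, zero_div] at this
    exact this
  · intro k x hx
    have he := eps_pos k
    have h := Rr_pos he x
    have hD := Dd_pos he x
    have hn : 0 < ‖x‖ := norm_pos_iff.2 hx
    rw [area_vB he hx, one_div, ← inv_pow]
    refine sqrt_bound (by positivity) (by positivity) ?_
    have : 0 ≤ ‖x‖⁻¹ * (eps k ^ 2 / (‖x‖ * Dd (eps k) x)) := by positivity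
    nlinarith

/-- The vortex map `u_V(x) = x/|x|` belongs to `W^{1,1}(B_r(0);S¹)` and
`𝒜(u_V,B_r(0)) ≤ ∫_{B_r(0)} √(1+1/|x|²) dx + min{2πr, π}`. -/
theorem relaxedArea_vortex_le (r : ℝ) (hr : 0 < r) :
    (∃ G : R2 → Matrix (Fin 2) (Fin 2) ℝ,
        MemW11 (Metric.ball (0 : R2) r) (fun x => ‖x‖⁻¹ • x) G) ∧
    SphereValued (Metric.ball (0 : R2) r) (fun x => ‖x‖⁻¹ • x) ∧
    relaxedArea (fun x => ‖x‖⁻¹ • x) (Metric.ball (0 : R2) r) ≤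
      ENNReal.ofReal (∫ x in Metric.ball (0 : R2) r, Real.sqrt (1 + 1 / ‖x‖ ^ 2)) +
        ENNReal.ofReal (min (2 * Real.pi * r) Real.pi) := by
  refine ⟨⟨Gv, memW11_u r⟩, ?_, ?_⟩
  · refine (ae_restrict_of_ae ae_ne_zero).mono fun x hx => ?_
    rw [norm_smul, norm_inv, norm_norm, inv_mul_cancel₀ (norm_ne_zero_iff.2 hx)]
  · rcases min_choice (2 * Real.pi * r) Real.pi with h | h
    · rw [h]; exact relaxed_B r
    · rw [h]; exact relaxed_A r hr
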